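/- Let q be a prime power and x_1,…,x_n positive reals with x_1+⋯+x_n = 1, and let Ψ^{G/B}, Ψ^{S_n} denote the unique stationary distributions of T_{G/B}(q,x) and T_{S_n}(q,x) respectively. Then: (a) Ψ^{G/B}_{gB} = Ψ^{G/B}_{g'B} whenever proj_{S_n}(gB) = proj_{S_n}(g'B), i.e. whenever gB and g'B lie in the same double coset; (b) for every π ∈ S_n, Ψ^{S_n}_π = ∑_{gB : gB∈[π]} Ψ^{G/B}_{gB} = q^{coinv(π)}·Ψ^{G/B}_{gB} for any gB ∈ [π], where coinv(π) = #{(i,j) : i < j, π_i < π_j}; (c) if moreover x is m-compatible for a composition m of n and x̄_j = [m_j]_q·x_{n_j}, then for every w ∈ W_m, the unique stationary distribution Ψ^{W_m} of T_{W_m}(q,x̄) satisfies Ψ^{W_m}_w = ∑_{π∈S_n : destd_m(π)=w} Ψ^{S_n}_π. -/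

import Mathlib

/-!
A map `f` lumps an operator `T` to `U` when the functions pulled back along `f` are stable under
`T`, which acts on them as `U`. Then `f` pushes stationary row vectors of `T` forward to
stationary row vectors of `U`, and if `f` is surjective and `T` is irreducible, so is `U`. By
Perron–Frobenius a stationary distribution of an irreducible operator is unique; as everything
below is a lumping out of `G/B`, only `T_{G/B}` has to be shown irreducible, and this holds because
the permutation matrices of the cycles `s_k ⋯ s_1` generate `G` together with `B`.

The `q` cosets in the expansion of `(gB)·T_i` are those in `g B s_i B / B`. So the Hecke generators
commute with the left action of `G`, while the weighting operator is invariant under `B⁻`: left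
multiplication by `l ∈ B⁻` lumps `T_{G/B}` to itself, which by uniqueness makes the stationary
distribution constant on double cosets. The `q` cosets also cover `G/B` evenly, `q` times, so the
constant vector on `G/B` is multiplied by `q` under `T_i`. Pushed forward to `S_n` this reads
`|[π]| = q |[π s_i]|` for `π_i < π_{i+1}`, whence `|[π]| = q^{coinv π}`.
-/

open scoped Classical
set_option synthInstance.maxHeartbeats 1000000
set_option maxHeartbeats 1000000

noncomputable section

namespace QTsetlin

/-- `M` is upper triangular. -/
def upperTri {F : Type} [Field F] {n : ℕ} (M : Matrix (Fin n) (Fin n) F) : Prop :=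
  ∀ i j : Fin n, j < i → M i j = 0

/-- `M` is lower triangular. -/
def lowerTri {F : Type} [Field F] {n : ℕ} (M : Matrix (Fin n) (Fin n) F) : Prop :=
  ∀ i j : Fin n, i < j → M i j = 0

variable (F : Type) [Field F] [Fintype F] [DecidableEq F] (n : ℕ)

/-- The general linear group `G = GL_n(F_q)`. -/
abbrev GLn := GL (Fin n) F

/-- The Borel subgroup `B` of invertible upper triangular matrices. -/
def Bsub : Subgroup (GLn F n) where
  carrier := {g | upperTri (g : Matrix (Fin n) (Fin n) F)}
  one_mem' := by
    intro i j hij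
    simp [Matrix.one_apply, (Fin.ne_of_lt hij).symm]
  mul_mem' := by
    intro a b ha hb i j hij
    exact Matrix.BlockTriangular.mul ha hb hij
  inv_mem' := by
    intro a ha
    have hdet : IsUnit ((a : Matrix (Fin n) (Fin n) F).det) :=
      (Matrix.isUnit_iff_isUnit_det _).mp a.isUnit
    have hinv : Invertible (a : Matrix (Fin n) (Fin n) F) :=
      Matrix.invertibleOfIsUnitDet _ hdet
    have h2 : ((a : Matrix (Fin n) (Fin n) F)⁻¹).BlockTriangular (id : Fin n → Fin n) :=
      Matrix.blockTriangular_inv_of_blockTriangular ha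
    show upperTri ((a⁻¹ : GLn F n) : Matrix (Fin n) (Fin n) F)
    rw [show ((a⁻¹ : GLn F n) : Matrix (Fin n) (Fin n) F)
        = (a : Matrix (Fin n) (Fin n) F)⁻¹ from Matrix.coe_units_inv a]
    exact h2

/-- The set of cosets `G/B`. -/
abbrev Cosets := GLn F n ⧸ Bsub F n

/-- permutation matrix of `π`: entry 1 in positions `(π j, j)`. -/
def permMat (π : Equiv.Perm (Fin n)) : Matrix (Fin n) (Fin n) F :=
  fun i j => if π j = i then 1 else 0

lemma permMat_mul (π σ : Equiv.Perm (Fin n)) :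
    permMat F n π * permMat F n σ = permMat F n (π * σ) := by
  ext i j
  rw [Matrix.mul_apply]
  simp only [permMat, mul_ite, ite_mul, one_mul, mul_one, mul_zero, zero_mul]
  rw [Finset.sum_eq_single (σ j)]
  · rw [if_pos rfl, Equiv.Perm.mul_apply]
  · intro k _ hk
    simp [hk.symm]
  · simp

lemma permMat_one : permMat F n 1 = 1 := by
  ext i j
  simp [permMat, Matrix.one_apply, eq_comm]

/-- The permutation matrix of `π`, as an element of `GL_n(F)`. -/
def permGL (π : Equiv.Perm (Fin n)) : GLn F n :=
  ⟨permMat F n π, permMat F n π⁻¹,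
    by rw [permMat_mul, mul_inv_cancel, permMat_one],
    by rw [permMat_mul, inv_mul_cancel, permMat_one]⟩

/-- `f_i(t)`: identity matrix with an extra entry `t` in position `(r, c)`, as an
element of `GL_n(F)`. -/
def transvGL (r c : Fin n) (h : r ≠ c) (t : F) : GLn F n :=
  ⟨Matrix.transvection r c t, Matrix.transvection r c (-t),
    by rw [Matrix.transvection_mul_transvection_same _ _ h, add_neg_cancel,
      Matrix.transvection_zero],
    by rw [Matrix.transvection_mul_transvection_same _ _ h, neg_add_cancel,
      Matrix.transvection_zero]⟩

variable (K : Type) [Field K]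

/-- Matrix (row convention: row `gB` is `(gB) · T_{k+1}`) of the Hecke generator `T_{k+1}`
(paper indexing) on `ℂ[G/B]`:
`(gB)·T_i = g s_i B + ∑_{t ≠ 0} g f_i(t) B`, where `s_i` swaps (0-based) positions `k, k+1`
and `f_i(t)` has an extra entry `t` in (0-based) position `(k+1, k)`. -/
def genGB (k : ℕ) : Matrix (Cosets F n) (Cosets F n) K := fun C D =>
  if h : k + 1 < n then
    (if (QuotientGroup.mk (C.out * permGL F n
          (Equiv.swap ⟨k, Nat.lt_of_succ_lt h⟩ ⟨k + 1, h⟩)) : Cosets F n) = D then 1 else 0)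
    + ((Finset.univ.filter fun t : F => t ≠ 0 ∧
        (QuotientGroup.mk (C.out * transvGL F n ⟨k + 1, h⟩ ⟨k, Nat.lt_of_succ_lt h⟩
          (fun hc => by simp [Fin.ext_iff] at hc) t) : Cosets F n) = D).card : K)
  else 0

/-- Matrix of the product `T_k T_{k-1} ⋯ T_1` (paper indexing) on `ℂ[G/B]`. -/
def prodGenGB : ℕ → Matrix (Cosets F n) (Cosets F n) K
  | 0 => 1
  | k + 1 => genGB F n K k * prodGenGB k

/-- The (0-based) row index of the leading entry (the pivot `1` of the distinguished coset
representative) in the first column of a representative of the coset `C`. -/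
def pivotRow (C : Cosets F n) : ℕ :=
  sInf {i : ℕ | ∃ h : i < n,
    ((C.out : GLn F n) : Matrix (Fin n) (Fin n) F) ⟨i, h⟩
      ⟨0, Nat.lt_of_le_of_lt (Nat.zero_le i) h⟩ ≠ 0}

/-- Matrix of the weighting operator `X_{G/B}(q,x)`, where `q` is the cardinality of the
field: `gB ↦ (x_i / q^{n-i}) gB` with `i` the row index of the leading 1 in the first
column of the distinguished representative of `gB`. -/
def XGB (x : Fin n → K) : Matrix (Cosets F n) (Cosets F n) K := fun C D =>
  if D = C then
    (if h : pivotRow F n C < n then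
      x ⟨pivotRow F n C, h⟩ / (Fintype.card F : K) ^ (n - 1 - pivotRow F n C)
    else 0)
  else 0

/-- Matrix of the q-Tsetlin library operator
`T_{G/B}(q,x) = (∑_{i=1}^n T_{i-1} ⋯ T_1) ∘ X_{G/B}(q,x)` on `ℂ[G/B]` (row convention). -/
def TGB (x : Fin n → K) : Matrix (Cosets F n) (Cosets F n) K :=
  (∑ k ∈ Finset.range n, prodGenGB F n K k) * XGB F n K x

/-- The coset `gB` belongs to the double coset `[π] = B⁻ π B`. -/
def inDC (π : Equiv.Perm (Fin n)) (C : Cosets F n) : Prop :=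
  ∃ l b : GLn F n, lowerTri (l : Matrix (Fin n) (Fin n) F) ∧
    upperTri (b : Matrix (Fin n) (Fin n) F) ∧
    C = QuotientGroup.mk (l * permGL F n π * b)

/-- Number of coinversions `#{(i,j) : i < j, π_i < π_j}` of a permutation. -/
def coinvCount {m : ℕ} (π : Equiv.Perm (Fin m)) : ℕ :=
  (Finset.univ.filter fun p : Fin m × Fin m => p.1 < p.2 ∧ π p.1 < π p.2).card

/-- Matrix (row convention) of the Hecke generator `T_{k+1}` (paper indexing) on `ℂS_n`. -/
def genMatP (m : ℕ) {R : Type} [Field R] (q : R) (k : ℕ) :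
    Matrix (Equiv.Perm (Fin m)) (Equiv.Perm (Fin m)) R := fun π σ =>
  if h : k + 1 < m then
    if π ⟨k + 1, h⟩ < π ⟨k, Nat.lt_of_succ_lt h⟩ then
      (if σ = π * Equiv.swap ⟨k, Nat.lt_of_succ_lt h⟩ ⟨k + 1, h⟩ then q else 0)
    else
      (if σ = π * Equiv.swap ⟨k, Nat.lt_of_succ_lt h⟩ ⟨k + 1, h⟩ then 1 else 0)
        + (if σ = π then q - 1 else 0)
  else 0

/-- Matrix of the product `T_k T_{k-1} ⋯ T_1` on permutations. -/
def prodGenP (m : ℕ) {R : Type} [Field R] (q : R) :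
    ℕ → Matrix (Equiv.Perm (Fin m)) (Equiv.Perm (Fin m)) R
  | 0 => 1
  | k + 1 => genMatP m q k * prodGenP m q k

/-- Matrix of the weighting operator `X_{S_n}(q,x)`. -/
def XSnP (m : ℕ) {R : Type} [Field R] (q : R) (x : Fin m → R) :
    Matrix (Equiv.Perm (Fin m)) (Equiv.Perm (Fin m)) R := fun π σ =>
  if σ = π then
    (if h : 0 < m then x (π ⟨0, h⟩) / q ^ (m - 1 - (π ⟨0, h⟩ : ℕ)) else 0)
  else 0

/-- Matrix of the q-Tsetlin library operator `T_{S_n}(q,x)` (row convention). -/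
def TSnP (m : ℕ) {R : Type} [Field R] (q : R) (x : Fin m → R) :
    Matrix (Equiv.Perm (Fin m)) (Equiv.Perm (Fin m)) R :=
  (∑ k ∈ Finset.range m, prodGenP m q k) * XSnP m q x

/-- The q-integer `[a]_q = 1 + q + ⋯ + q^{a-1}`. -/
def qInt {R : Type} [Field R] (q : R) (a : ℕ) : R := ∑ r ∈ Finset.range a, q ^ r

/-- `n_j = m_1 + ⋯ + m_j` (the first `j` parts of the composition, `j : ℕ`). -/
def nsum (l : ℕ) (m : Fin l → ℕ) (j : ℕ) : ℕ :=
  ∑ t ∈ Finset.univ.filter fun t : Fin l => (t : ℕ) < j, m t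

/-- The (0-based) index `j` of the block `M_{j+1} = {n_j + 1, …, n_{j+1}}` containing the
0-based value `v` (paper value `v+1`). -/
def blockOf (l : ℕ) (m : Fin l → ℕ) (v : ℕ) : ℕ :=
  sInf {j : ℕ | v < nsum l m (j + 1)}

/-- Words of length `nn` in the alphabet `{1,…,l}` with `m j` occurrences of letter `j`. -/
abbrev Words (nn l : ℕ) (m : Fin l → ℕ) : Type :=
  {w : Fin nn → Fin l // ∀ j, (Finset.univ.filter fun i => w i = j).card = m j}

/-- Matrix (row convention) of the Hecke generator `T_{k+1}` (paper indexing) on words. -/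
def genMatW (nn l : ℕ) (m : Fin l → ℕ) {R : Type} [Field R] (q : R) (k : ℕ) :
    Matrix (Words nn l m) (Words nn l m) R := fun w u =>
  if h : k + 1 < nn then
    if w.1 ⟨k + 1, h⟩ ≤ w.1 ⟨k, Nat.lt_of_succ_lt h⟩ then
      (if u.1 = w.1 ∘ Equiv.swap ⟨k, Nat.lt_of_succ_lt h⟩ ⟨k + 1, h⟩ then q else 0)
    else
      (if u.1 = w.1 ∘ Equiv.swap ⟨k, Nat.lt_of_succ_lt h⟩ ⟨k + 1, h⟩ then 1 else 0)
        + (if u = w then q - 1 else 0)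
  else 0

/-- Matrix of the product `T_k T_{k-1} ⋯ T_1` on words. -/
def prodGenW (nn l : ℕ) (m : Fin l → ℕ) {R : Type} [Field R] (q : R) :
    ℕ → Matrix (Words nn l m) (Words nn l m) R
  | 0 => 1
  | k + 1 => genMatW nn l m q k * prodGenW nn l m q k

/-- Matrix of the weighting operator `X_{W_m}(q,x̄)`. -/
def XW (nn l : ℕ) (m : Fin l → ℕ) {R : Type} [Field R] (q : R) (xb : Fin l → R) :
    Matrix (Words nn l m) (Words nn l m) R := fun w u =>
  if u = w then
    (if h : 0 < nn then
      xb (w.1 ⟨0, h⟩) /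
        (q ^ (∑ t ∈ Finset.univ.filter fun t : Fin l => w.1 ⟨0, h⟩ < t, m t)
          * qInt q (m (w.1 ⟨0, h⟩)))
    else 0)
  else 0

/-- Matrix of the q-Tsetlin library operator `T_{W_m}(q,x̄)` (row convention). -/
def TWm (nn l : ℕ) (m : Fin l → ℕ) {R : Type} [Field R] (q : R) (xb : Fin l → R) :
    Matrix (Words nn l m) (Words nn l m) R :=
  (∑ k ∈ Finset.range nn, prodGenW nn l m q k) * XW nn l m q xb

/-- The weights `x` are `m`-compatible: `y_i = x_i / q^{n-i}` is constant on blocks. -/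
def mCompatible (nn l : ℕ) (m : Fin l → ℕ) (q : ℝ) (x : Fin nn → ℝ) : Prop :=
  ∀ i i' : Fin nn, blockOf l m (i : ℕ) = blockOf l m (i' : ℕ) →
    x i / q ^ (nn - 1 - (i : ℕ)) = x i' / q ^ (nn - 1 - (i' : ℕ))

/-- `Ψ` is a stationary distribution: a nonnegative row vector with entries summing to `1`
such that `Ψ · T = c Ψ`. -/
def IsStationary {P : Type} [Fintype P] (T : Matrix P P ℝ) (c : ℝ) (Ψ : P → ℝ) : Prop :=
  (∀ p, 0 ≤ Ψ p) ∧ (∑ p, Ψ p = 1) ∧ Matrix.vecMul Ψ T = c • Ψ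

/-! ### Lumping -/

/-- `T` lumps to `U` along `f`: the functions on `B`, pulled back to `A` along `f`, are stable
under `T`, which acts on them as `U`. -/
def Lump {R A B : Type*} [NonUnitalNonAssocSemiring R] [Fintype A] [Fintype B] (f : A → B)
    (T : Matrix A A R) (U : Matrix B B R) : Prop :=
  ∀ φ : B → R, T.mulVec (φ ∘ f) = U.mulVec φ ∘ f

/-- The pushforward of a row vector `Ψ` along `f`: it sums `Ψ` over the fibers of `f`. -/
def push {R A B : Type*} [AddCommMonoid R] [Fintype A] [DecidableEq B] (f : A → B) (Ψ : A → R)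
    (b : B) : R :=
  ∑ a with f a = b, Ψ a

namespace Lump

variable {R A B : Type*} [Semiring R] [Fintype A] [Fintype B] {f : A → B}
  {T T' : Matrix A A R} {U U' : Matrix B B R}

lemma zero (f : A → B) : Lump f (0 : Matrix A A R) 0 := by
  intro φ
  ext a
  simp

lemma one [DecidableEq A] [DecidableEq B] (f : A → B) : Lump f (1 : Matrix A A R) 1 := by
  intro φ
  simp

lemma mul (h : Lump f T U) (h' : Lump f T' U') : Lump f (T * T') (U * U') := by
  intro φ
  rw [← Matrix.mulVec_mulVec, h', h, Matrix.mulVec_mulVec]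

lemma pow [DecidableEq A] [DecidableEq B] (h : Lump f T U) (k : ℕ) :
    Lump f (T ^ k) (U ^ k) := by
  induction k with
  | zero => simpa only [pow_zero] using one f
  | succ k ih => simpa only [pow_succ] using ih.mul h

lemma sum {ι : Type*} {T : ι → Matrix A A R} {U : ι → Matrix B B R}
    (h : ∀ k, Lump f (T k) (U k)) (s : Finset ι) : Lump f (∑ k ∈ s, T k) (∑ k ∈ s, U k) := by
  intro φ
  ext a
  simp only [Matrix.sum_mulVec, Finset.sum_apply, Function.comp_apply]
  exact Finset.sum_congr rfl fun k _ => congrFun (h k φ) a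

lemma diagonal [DecidableEq A] [DecidableEq B] (f : A → B) (d : B → R) :
    Lump f (Matrix.diagonal (d ∘ f)) (Matrix.diagonal d) := by
  intro φ
  ext a
  simp only [Matrix.mulVec_diagonal, Function.comp_apply]

lemma tsetlin [DecidableEq A] [DecidableEq B] {S P : ℕ → Matrix A A R}
    {S' P' : ℕ → Matrix B B R} (hP₀ : P 0 = 1) (hP : ∀ k, P (k + 1) = S k * P k)
    (hP₀' : P' 0 = 1) (hP' : ∀ k, P' (k + 1) = S' k * P' k) (hS : ∀ k, Lump f (S k) (S' k))
    (hX : Lump f T U) (N : ℕ) :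
    Lump f ((∑ k ∈ Finset.range N, P k) * T) ((∑ k ∈ Finset.range N, P' k) * U) := by
  have lump_prod (k : ℕ) : Lump f (P k) (P' k) := by
    induction k with
    | zero => rw [hP₀, hP₀']; exact one f
    | succ k ih => rw [hP, hP']; exact (hS k).mul ih
  exact (sum lump_prod _).mul hX

lemma apply_eq [DecidableEq B] (h : Lump f T U) (a : A) (b : B) :
    U (f a) b = ∑ a' with f a' = b, T a a' := by
  have h_single := congrFun (h (Pi.single b 1)) a
  simpa [Matrix.mulVec, dotProduct, Pi.single_apply, Finset.sum_filter] using h_single.symm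

end Lump

section push

variable {R A B : Type*} [Fintype A] [DecidableEq B]

lemma push_dotProduct [Fintype B] [NonUnitalNonAssocSemiring R] (f : A → B) (Ψ : A → R)
    (φ : B → R) : push f Ψ ⬝ᵥ φ = Ψ ⬝ᵥ (φ ∘ f) := by
  simp only [dotProduct, push, Finset.sum_mul, Function.comp_apply]
  rw [← Finset.sum_fiberwise Finset.univ f]
  refine Finset.sum_congr rfl fun b _ => Finset.sum_congr rfl fun a ha => ?_
  rw [(Finset.mem_filter.mp ha).2]

lemma sum_push [Fintype B] [AddCommMonoid R] (f : A → B) (Ψ : A → R) :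
    ∑ b, push f Ψ b = ∑ a, Ψ a :=
  Finset.sum_fiberwise Finset.univ f Ψ

lemma push_smul [NonUnitalNonAssocSemiring R] (f : A → B) (c : R) (Ψ : A → R) :
    push f (c • Ψ) = c • push f Ψ := by
  ext b
  simp only [push, Pi.smul_apply, smul_eq_mul, Finset.mul_sum]

lemma push_apply_of_injective [AddCommMonoid R] {f : A → B} (hf : Function.Injective f)
    (Ψ : A → R) (a : A) : push f Ψ (f a) = Ψ a := by
  rw [push, Finset.sum_filter]
  simp [hf.eq_iff]

lemma Lump.vecMul_push [Fintype B] [Semiring R] {f : A → B} {T : Matrix A A R}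
    {U : Matrix B B R} (h : Lump f T U) (Ψ : A → R) :
    Matrix.vecMul (push f Ψ) U = push f (Matrix.vecMul Ψ T) := by
  refine dotProduct_eq _ _ fun φ => ?_
  rw [← Matrix.dotProduct_mulVec, push_dotProduct, push_dotProduct, ← h φ,
    Matrix.dotProduct_mulVec]

end push

lemma Lump.stationary {A B : Type} [Fintype A] [Fintype B] [DecidableEq B] {f : A → B}
    {T : Matrix A A ℝ} {U : Matrix B B ℝ} (h : Lump f T U) {c : ℝ} {Ψ : A → ℝ}
    (hΨ : IsStationary T c Ψ) : IsStationary U c (push f Ψ) := by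
  obtain ⟨h_nonneg, h_sum, h_eig⟩ := hΨ
  refine ⟨fun b => Finset.sum_nonneg fun a _ => h_nonneg a, ?_, ?_⟩
  · rw [sum_push, h_sum]
  · rw [h.vecMul_push, h_eig, push_smul]

/-! ### Uniqueness of the stationary distribution -/

lemma Lump.isIrreducible {R A B : Type*} [Ring R] [LinearOrder R] [IsStrictOrderedRing R]
    [Fintype A] [Fintype B] {f : A → B} {T : Matrix A A R} {U : Matrix B B R} (h : Lump f T U)
    (hf : Function.Surjective f) (hT : T.IsIrreducible) : U.IsIrreducible := by
  have hU (b b' : B) : 0 ≤ U b b' := by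
    obtain ⟨a, rfl⟩ := hf b
    rw [h.apply_eq]
    exact Finset.sum_nonneg fun a' _ => hT.nonneg a a'
  rw [Matrix.isIrreducible_iff_exists_pow_pos hU]
  intro b b'
  obtain ⟨a, rfl⟩ := hf b
  obtain ⟨a', rfl⟩ := hf b'
  obtain ⟨k, hk, hpos⟩ := (Matrix.isIrreducible_iff_exists_pow_pos hT.nonneg).mp hT a a'
  refine ⟨k, hk, ?_⟩
  rw [(h.pow k).apply_eq]
  exact Finset.sum_pos' (fun i _ => Matrix.pow_apply_nonneg hT.nonneg k a i)
    ⟨a', by simp, hpos⟩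

section perronFrobenius

lemma vecMul_pow_eq_smul {R A : Type*} [CommSemiring R] [Fintype A] [DecidableEq A]
    {T : Matrix A A R} {c : R} {Ψ : A → R} (h_eig : Matrix.vecMul Ψ T = c • Ψ) (k : ℕ) :
    Matrix.vecMul Ψ (T ^ k) = c ^ k • Ψ := by
  induction k with
  | zero => simp
  | succ k ih => rw [pow_succ, ← Matrix.vecMul_vecMul, ih, Matrix.smul_vecMul, h_eig, smul_smul,
      pow_succ]

variable {R A : Type*} [Field R] [LinearOrder R] [IsStrictOrderedRing R] [Fintype A]
  {T : Matrix A A R} {c : R} {Ψ Ψ' : A → R}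

lemma pos_of_isIrreducible (hT : T.IsIrreducible) (h_nonneg : ∀ a, 0 ≤ Ψ a)
    (h_eig : Matrix.vecMul Ψ T = c • Ψ) {a : A} (ha : 0 < Ψ a) (b : A) : 0 < Ψ b := by
  obtain ⟨k, -, hpos⟩ := (Matrix.isIrreducible_iff_exists_pow_pos hT.nonneg).mp hT a b
  have h_vecMul_pos : 0 < Matrix.vecMul Ψ (T ^ k) b :=
    Finset.sum_pos' (fun i _ => mul_nonneg (h_nonneg i) (Matrix.pow_apply_nonneg hT.nonneg k i b))
      ⟨a, Finset.mem_univ a, mul_pos ha hpos⟩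
  rw [vecMul_pow_eq_smul h_eig] at h_vecMul_pos
  exact (h_nonneg b).lt_of_ne' (right_ne_zero_of_mul h_vecMul_pos.ne')

-- Subtract from `Ψ` the largest multiple of `Ψ'` that keeps the difference nonnegative: the
-- difference is a nonnegative eigenvector with a zero entry, hence zero.
lemma exists_eq_smul_of_isIrreducible (hT : T.IsIrreducible) (h_eig : Matrix.vecMul Ψ T = c • Ψ)
    (h_pos' : ∀ a, 0 < Ψ' a) (h_eig' : Matrix.vecMul Ψ' T = c • Ψ') : ∃ r : R, Ψ = r • Ψ' := by
  rcases isEmpty_or_nonempty A with _ | _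
  · exact ⟨0, Subsingleton.elim _ _⟩
  obtain ⟨p, hp⟩ := Finite.exists_min fun a => Ψ a / Ψ' a
  set r := Ψ p / Ψ' p
  have diff_nonneg (a : A) : 0 ≤ (Ψ - r • Ψ') a :=
    sub_nonneg.mpr ((le_div_iff₀ (h_pos' a)).mp (hp a))
  have diff_eig : Matrix.vecMul (Ψ - r • Ψ') T = c • (Ψ - r • Ψ') := by
    rw [Matrix.sub_vecMul, Matrix.smul_vecMul, h_eig, h_eig', smul_sub, smul_comm]
  have diff_zero : (Ψ - r • Ψ') p = 0 :=
    sub_eq_zero.mpr (div_mul_cancel₀ _ (h_pos' p).ne').symm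
  refine ⟨r, sub_eq_zero.mp (funext fun a => ?_)⟩
  by_contra h_ne
  exact (pos_of_isIrreducible hT diff_nonneg diff_eig
    ((diff_nonneg a).lt_of_ne' h_ne) p).ne' diff_zero

end perronFrobenius

section stationary

variable {A : Type} [Fintype A] {T : Matrix A A ℝ} {c : ℝ} {Ψ Ψ' : A → ℝ}

lemma IsStationary.pos (hT : T.IsIrreducible) (hΨ : IsStationary T c Ψ) (a : A) : 0 < Ψ a := by
  obtain ⟨h_nonneg, h_sum, h_eig⟩ := hΨ
  obtain ⟨b, -, hb⟩ := Finset.exists_ne_zero_of_sum_ne_zero (h_sum.trans_ne one_ne_zero)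
  exact pos_of_isIrreducible hT h_nonneg h_eig ((h_nonneg b).lt_of_ne' hb) a

theorem IsStationary.eq (hT : T.IsIrreducible) (hΨ : IsStationary T c Ψ)
    (hΨ' : IsStationary T c Ψ') : Ψ = Ψ' := by
  obtain ⟨r, rfl⟩ := exists_eq_smul_of_isIrreducible hT hΨ.2.2 (hΨ'.pos hT) hΨ'.2.2
  have hr : r = 1 := by
    simpa [← Finset.mul_sum, hΨ'.2.1] using hΨ.2.1
  rw [hr, one_smul]

lemma IsStationary.apply_eq_of_lump (hT : T.IsIrreducible) (hΨ : IsStationary T c Ψ)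
    {σ : A → A} (hσ : Function.Injective σ) (h_lump : Lump σ T T) (a : A) : Ψ (σ a) = Ψ a := by
  rw [← push_apply_of_injective hσ Ψ a, (h_lump.stationary hΨ).eq hT hΨ]

end stationary

/-! ### Triangular and permutation matrices -/

lemma swap_lt_swap_of_covBy {α : Type*} [LinearOrder α] {a b i j : α} (hab : a ⋖ b) (hij : i < j)
    (h_ne : ¬(i = a ∧ j = b)) : Equiv.swap a b i < Equiv.swap a b j := by
  have := hab.lt
  have := hab.2 (c := i)
  have := hab.2 (c := j)
  grind

lemma exists_covBy_of_add_one_lt {N k : ℕ} (h : k + 1 < N) : ∃ a b : Fin N, a ⋖ b ∧ (a : ℕ) = k :=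
  ⟨⟨k, by lia⟩, ⟨k + 1, h⟩, Fin.covBy_iff.mpr (Order.covBy_add_one k), rfl⟩

lemma eq_mk_add_one_of_covBy {N : ℕ} {a b : Fin N} (hab : a ⋖ b) :
    ∃ h : (a : ℕ) + 1 < N, b = ⟨a + 1, h⟩ := by
  have h_succ := Order.covBy_iff_add_one_eq.mp (Fin.covBy_iff.mp hab)
  exact ⟨h_succ ▸ b.2, Fin.ext h_succ.symm⟩

section triangular

/-- The opposite Borel subgroup `B⁻` of invertible lower triangular matrices. -/
def oppBorel (E : Type) [Field E] (N : ℕ) : Subgroup (GLn E N) where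
  carrier := {g | lowerTri (g : Matrix (Fin N) (Fin N) E)}
  one_mem' := Matrix.blockTriangular_one (b := OrderDual.toDual)
  mul_mem' := fun ha hb => Matrix.BlockTriangular.mul (b := OrderDual.toDual) ha hb
  inv_mem' := by
    intro a ha
    have := a.invertible
    change lowerTri ((a⁻¹ : GLn E N) : Matrix (Fin N) (Fin N) E)
    rw [Matrix.coe_units_inv]
    exact Matrix.blockTriangular_inv_of_blockTriangular (b := OrderDual.toDual) ha

variable {E : Type} [Field E] {N : ℕ} {g : GLn E N}

lemma diag_ne_zero_of_mem_Bsub (hg : g ∈ Bsub E N) (i : Fin N) : g i i ≠ 0 := by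
  have h_det := Matrix.GeneralLinearGroup.det_ne_zero g
  rw [Matrix.det_of_isUpperTriangular hg] at h_det
  exact Finset.prod_ne_zero_iff.mp h_det i (Finset.mem_univ i)

lemma diag_ne_zero_of_mem_oppBorel (hg : g ∈ oppBorel E N) (i : Fin N) : g i i ≠ 0 := by
  have h_det := Matrix.GeneralLinearGroup.det_ne_zero g
  rw [Matrix.det_of_isLowerTriangular _ hg] at h_det
  exact Finset.prod_ne_zero_iff.mp h_det i (Finset.mem_univ i)

variable {r c : Fin N}

lemma transvGL_apply (h : r ≠ c) (t : E) (i j : Fin N) :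
    transvGL E N r c h t i j = (if i = j then 1 else 0) + if r = i ∧ c = j then t else 0 := by
  change Matrix.transvection r c t i j = _
  simp [Matrix.transvection, Matrix.one_apply, Matrix.single_apply]

lemma transvGL_zero (h : r ≠ c) : transvGL E N r c h 0 = 1 :=
  Units.ext (Matrix.transvection_zero r c)

lemma transvGL_mem_Bsub (h : r < c) (t : E) : transvGL E N r c h.ne t ∈ Bsub E N :=
  Matrix.blockTriangular_transvection h.le t

lemma transvGL_mem_oppBorel (h : c < r) (t : E) : transvGL E N r c h.ne' t ∈ oppBorel E N :=
  Matrix.blockTriangular_transvection (b := OrderDual.toDual) (by exact h.le) t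

lemma eq_top_of_isDiag_mem_of_transvGL_mem {H : Submonoid (GLn E N)}
    (h_diag : ∀ g : GLn E N, (g : Matrix (Fin N) (Fin N) E).IsDiag → g ∈ H)
    (h_transv : ∀ {r c : Fin N} (h : r ≠ c) (t : E), transvGL E N r c h t ∈ H) : H = ⊤ := by
  rw [eq_top_iff]
  rintro g -
  refine Matrix.diagonal_transvection_induction_of_det_ne_zero
    (fun M => ∀ g : GLn E N, (g : Matrix (Fin N) (Fin N) E) = M → g ∈ H) g
    (Matrix.GeneralLinearGroup.det_ne_zero g) ?_ ?_ ?_ g rfl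
  · intro d _ g hg
    exact h_diag g (hg ▸ Matrix.isDiag_diagonal d)
  · rintro ⟨r, c, h, t⟩ g hg
    rw [show g = transvGL E N r c h t from Units.ext hg]
    exact h_transv h t
  · intro M M' hM hM' ihM ihM' g hg
    rw [show g = .mkOfDetNeZero M hM * .mkOfDetNeZero M' hM' from Units.ext hg]
    exact H.mul_mem (ihM _ rfl) (ihM' _ rfl)

end triangular

section permutation

variable {F n}

variable (F n) in
/-- `permGL` as a group homomorphism. -/
def permHom : Equiv.Perm (Fin n) →* GLn F n :=
  MonoidHom.mk' (permGL F n) fun π σ => Units.ext (permMat_mul F n π σ).symm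

lemma permGL_one : permGL F n 1 = 1 := map_one (permHom F n)

lemma permGL_mul (π σ : Equiv.Perm (Fin n)) :
    permGL F n (π * σ) = permGL F n π * permGL F n σ := map_mul (permHom F n) π σ

lemma permGL_inv (π : Equiv.Perm (Fin n)) : permGL F n π⁻¹ = (permGL F n π)⁻¹ :=
  map_inv (permHom F n) π

lemma inv_permGL_mul_mul_permGL_apply (π σ : Equiv.Perm (Fin n)) (g : GLn F n) (i j : Fin n) :
    ((permGL F n π)⁻¹ * g * permGL F n σ) i j = g (π i) (σ j) := by
  rw [← permGL_inv]
  change (permMat F n π⁻¹ * (g : Matrix (Fin n) (Fin n) F) * permMat F n σ) i j = _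
  simp [Matrix.mul_apply, permMat, Equiv.symm_apply_eq]

lemma permGL_mul_transvGL (π : Equiv.Perm (Fin n)) {r c : Fin n} (h : r ≠ c) (t : F) :
    permGL F n π * transvGL F n r c h t
      = transvGL F n (π r) (π c) (π.injective.ne h) t * permGL F n π := by
  symm
  rw [← inv_mul_eq_iff_eq_mul, ← mul_assoc]
  ext i j
  rw [inv_permGL_mul_mul_permGL_apply, transvGL_apply, transvGL_apply]
  simp

lemma closure_swap_covBy (N : ℕ) :
    Submonoid.closure {σ : Equiv.Perm (Fin N) | ∃ a b, a ⋖ b ∧ σ = Equiv.swap a b} = ⊤ := by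
  rcases N with _ | N
  · exact Subsingleton.elim _ _
  rw [← top_le_iff, ← Equiv.Perm.mclosure_swap_castSucc_succ N]
  refine Submonoid.closure_mono ?_
  rintro _ ⟨i, rfl⟩
  exact ⟨_, _, Fin.covBy_iff.mpr (Order.covBy_add_one _), rfl⟩

variable (F n) in
theorem closure_Bsub_union_permGL_swap :
    Submonoid.closure ((Bsub F n : Set (GLn F n)) ∪
      {g | ∃ a b, a ⋖ b ∧ g = permGL F n (Equiv.swap a b)}) = ⊤ := by
  set H := Submonoid.closure ((Bsub F n : Set (GLn F n)) ∪
    {g | ∃ a b, a ⋖ b ∧ g = permGL F n (Equiv.swap a b)})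
  have mem_of_mem_Bsub {g : GLn F n} (hg : g ∈ Bsub F n) : g ∈ H :=
    Submonoid.subset_closure (Or.inl hg)
  have permGL_mem (π : Equiv.Perm (Fin n)) : permGL F n π ∈ H := by
    have h_le : Submonoid.closure {σ | ∃ a b, a ⋖ b ∧ σ = Equiv.swap a b} ≤
        H.comap (permHom F n) := by
      rw [Submonoid.closure_le]
      rintro _ ⟨a, b, hab, rfl⟩
      exact Submonoid.subset_closure (Or.inr ⟨a, b, hab, rfl⟩)
    exact h_le (closure_swap_covBy n ▸ Submonoid.mem_top π)
  have transvGL_mem {r c : Fin n} (h : r ≠ c) (t : F) : transvGL F n r c h t ∈ H := by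
    rcases lt_or_gt_of_ne h with hlt | hgt
    · exact mem_of_mem_Bsub (transvGL_mem_Bsub hlt t)
    · have h_conj := permGL_mul_transvGL (Equiv.swap r c) h.symm t
      simp only [Equiv.swap_apply_left, Equiv.swap_apply_right] at h_conj
      rw [eq_mul_inv_of_mul_eq h_conj.symm, ← permGL_inv]
      exact H.mul_mem (H.mul_mem (permGL_mem _) (mem_of_mem_Bsub (transvGL_mem_Bsub hgt t)))
        (permGL_mem _)
  exact eq_top_of_isDiag_mem_of_transvGL_mem
    (fun _ hg => mem_of_mem_Bsub fun _ _ hij => hg hij.ne') fun h t => transvGL_mem h t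

end permutation

/-! ### Hecke generators on `G/B` -/

lemma sum_card_filter_mul {ι κ R : Type*} [Fintype κ] [DecidableEq κ] [Semiring R]
    (s : Finset ι) (f : ι → κ) (φ : κ → R) :
    ∑ d, (Finset.card {t ∈ s | f t = d} : R) * φ d = ∑ t ∈ s, φ (f t) := by
  rw [← Finset.sum_fiberwise s f]
  refine Finset.sum_congr rfl fun d _ => ?_
  rw [Finset.sum_congr rfl fun t ht => congrArg φ (Finset.mem_filter.mp ht).2, Finset.sum_const,
    nsmul_eq_mul]

section heckeGB

variable {F n} {a b : Fin n}

/-- The matrix `e_{ab}(u) s`, with `e_{ab}(u)` elementary and `s` the matrix of the adjacent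
transposition `(a b)`. As `u` runs through `F`, these represent the cosets in `BsB/B`. -/
def elemRep (hab : a ⋖ b) (u : F) : GLn F n :=
  transvGL F n a b hab.ne u * permGL F n (Equiv.swap a b)

lemma elemRep_zero (hab : a ⋖ b) : elemRep hab (0 : F) = permGL F n (Equiv.swap a b) := by
  rw [elemRep, transvGL_zero, one_mul]

lemma permGL_swap_inv_mul_mul_mem_Bsub (hab : a ⋖ b) {g : GLn F n} (hg : g ∈ Bsub F n)
    (h_zero : g a b = 0) :
    (permGL F n (Equiv.swap a b))⁻¹ * g * permGL F n (Equiv.swap a b) ∈ Bsub F n := by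
  intro i j hij
  rw [inv_permGL_mul_mul_permGL_apply]
  by_cases h : j = a ∧ i = b
  · rwa [h.1, h.2, Equiv.swap_apply_left, Equiv.swap_apply_right]
  · exact hg _ _ (swap_lt_swap_of_covBy hab hij h)

lemma smul_mk_elemRep (hab : a ⋖ b) {h : GLn F n} (hh : h ∈ Bsub F n) (u : F) :
    h • (elemRep hab u : Cosets F n) = elemRep hab ((h a b + h a a * u) / h b b) := by
  set v := (h a b + h a a * u) / h b b with hv
  rw [MulAction.Quotient.smul_mk, eq_comm, QuotientGroup.eq, smul_eq_mul]
  have h_eq : (elemRep hab v)⁻¹ * (h * elemRep hab u) = (permGL F n (Equiv.swap a b))⁻¹ *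
      ((transvGL F n a b hab.ne v)⁻¹ * h * transvGL F n a b hab.ne u) *
        permGL F n (Equiv.swap a b) := by
    simp only [elemRep]
    group
  rw [h_eq]
  refine permGL_swap_inv_mul_mul_mem_Bsub hab (mul_mem (mul_mem (inv_mem ?_) hh) ?_) ?_
  · exact transvGL_mem_Bsub hab.lt v
  · exact transvGL_mem_Bsub hab.lt u
  · change (Matrix.transvection a b (-v) * (h : Matrix (Fin n) (Fin n) F)
      * Matrix.transvection a b u) a b = 0
    rw [Matrix.mul_transvection_apply_same, Matrix.transvection_mul_apply_same,
      Matrix.transvection_mul_apply_same, hh b a hab.lt, hv]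
    have := diag_ne_zero_of_mem_Bsub hh b
    field_simp
    ring

lemma mk_transvGL_eq_mk_elemRep (hab : a ⋖ b) {t : F} (ht : t ≠ 0) :
    (transvGL F n b a hab.ne' t : Cosets F n) = elemRep hab t⁻¹ := by
  rw [eq_comm, QuotientGroup.eq]
  have h_eq : (elemRep hab t⁻¹)⁻¹ * transvGL F n b a hab.ne' t
      = (permGL F n (Equiv.swap a b))⁻¹ *
        ((transvGL F n a b hab.ne t⁻¹)⁻¹ * transvGL F n b a hab.ne' t) * permGL F n 1 := by
    rw [elemRep, permGL_one]
    group
  have h_mul : Matrix.transvection a b (-t⁻¹) * Matrix.transvection b a t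
      = 1 + Matrix.single b a t + Matrix.single a b (-t⁻¹) + Matrix.single a a (-1 : F) := by
    simp only [Matrix.transvection, add_mul, mul_add, one_mul, mul_one,
      Matrix.single_mul_single_same]
    rw [neg_mul, inv_mul_cancel₀ ht]
    abel
  rw [h_eq]
  intro i j hij
  rw [inv_permGL_mul_mul_permGL_apply]
  change (Matrix.transvection a b (-t⁻¹) * Matrix.transvection b a t) _ _ = 0
  rw [h_mul]
  have := hab.lt
  simp only [Matrix.add_apply, Matrix.one_apply, Matrix.single_apply,
    Equiv.Perm.one_apply]
  grind [swap_lt_swap_of_covBy hab hij]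

lemma sum_smul_elemRep {M : Type*} [AddCommMonoid M] (hab : a ⋖ b) {h : GLn F n}
    (hh : h ∈ Bsub F n) (ψ : Cosets F n → M) :
    ∑ u : F, ψ (h • (elemRep hab u : Cosets F n)) = ∑ u : F, ψ (elemRep hab u) := by
  have h_inj : Function.Injective fun u : F => (h a b + h a a * u) / h b b := fun u v huv =>
    mul_left_cancel₀ (diag_ne_zero_of_mem_Bsub hh a)
      (add_left_cancel ((div_left_inj' (diag_ne_zero_of_mem_Bsub hh b)).mp huv))
  exact Fintype.sum_bijective _ (Finite.injective_iff_bijective.mp h_inj) _ _ fun u =>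
    congrArg ψ (smul_mk_elemRep hab hh u)

variable {K}

lemma genGB_eq_zero {k : ℕ} (h : ¬k + 1 < n) : genGB F n K k = 0 := by
  ext C D
  exact dif_neg h

lemma genGB_mulVec (hab : a ⋖ b) (φ : Cosets F n → K) (C : Cosets F n) :
    (genGB F n K a).mulVec φ C = ∑ u : F, φ (C.out • (elemRep hab u : Cosets F n)) := by
  obtain ⟨h, rfl⟩ := eq_mk_add_one_of_covBy hab
  simp only [Matrix.mulVec, dotProduct, genGB, dif_pos h, add_mul, Finset.sum_add_distrib, ite_mul,
    one_mul, zero_mul, Finset.sum_ite_eq, Finset.mem_univ, if_true, ← Finset.filter_filter]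
  rw [sum_card_filter_mul, ← Equiv.sum_comp (Equiv.inv F),
    ← Finset.add_sum_erase Finset.univ _ (Finset.mem_univ (0 : F)), Finset.filter_ne']
  congr 1
  · simp only [Equiv.inv_apply, inv_zero, elemRep_zero, MulAction.Quotient.smul_mk, smul_eq_mul]
  · refine Finset.sum_congr rfl fun t ht => congrArg φ ?_
    rw [Equiv.inv_apply, ← mk_transvGL_eq_mk_elemRep hab (Finset.ne_of_mem_erase ht)]
    rfl

lemma genGB_mulVec_mk (hab : a ⋖ b) (φ : Cosets F n → K) (g : GLn F n) :
    (genGB F n K a).mulVec φ g = ∑ u : F, φ (g • (elemRep hab u : Cosets F n)) := by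
  obtain ⟨h, h_out⟩ := QuotientGroup.mk_out_eq_mul (Bsub F n) g
  rw [genGB_mulVec hab, h_out, ← sum_smul_elemRep hab h.2 fun C => φ (g • C)]
  simp only [mul_smul]

end heckeGB


/-! ### Bruhat decomposition -/

section bruhat

variable {F n}

lemma inDC_iff_exists_smul_eq {π : Equiv.Perm (Fin n)} {C : Cosets F n} :
    inDC F n π C ↔ ∃ l ∈ oppBorel F n, l • (permGL F n π : Cosets F n) = C := by
  constructor
  · rintro ⟨l, b, hl, hb, rfl⟩
    exact ⟨l, hl, (QuotientGroup.mk_mul_of_mem _ hb).symm⟩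
  · rintro ⟨l, hl, rfl⟩
    exact ⟨l, 1, hl, (Bsub F n).one_mem, by rw [mul_one]; rfl⟩

lemma inDC_smul {π : Equiv.Perm (Fin n)} {C : Cosets F n} {l : GLn F n} (hl : l ∈ oppBorel F n)
    (hC : inDC F n π C) : inDC F n π (l • C) := by
  obtain ⟨l', hl', rfl⟩ := inDC_iff_exists_smul_eq.mp hC
  exact inDC_iff_exists_smul_eq.mpr ⟨l * l', mul_mem hl hl', mul_smul _ _ _⟩

lemma apply_le_of_smul_mk_permGL_eq {π σ : Equiv.Perm (Fin n)} {l : GLn F n}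
    (hl : l ∈ oppBorel F n) (h_eq : l • (permGL F n σ : Cosets F n) = permGL F n π) (j : Fin n) :
    σ j ≤ π j := by
  have h_mem : (permGL F n π)⁻¹ * l * permGL F n σ ∈ Bsub F n := by
    rw [mul_assoc]
    exact QuotientGroup.eq.mp h_eq.symm
  have h_ne := diag_ne_zero_of_mem_Bsub h_mem j
  rw [inv_permGL_mul_mul_permGL_apply] at h_ne
  exact not_lt.mp fun h_lt => h_ne (hl _ _ h_lt)

theorem eq_of_inDC_of_inDC {π σ : Equiv.Perm (Fin n)} {C : Cosets F n} (hπ : inDC F n π C)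
    (hσ : inDC F n σ C) : π = σ := by
  obtain ⟨l, hl, rfl⟩ := inDC_iff_exists_smul_eq.mp hπ
  obtain ⟨l', hl', h_eq⟩ := inDC_iff_exists_smul_eq.mp hσ
  rw [smul_eq_iff_eq_inv_smul, smul_smul] at h_eq
  have h_mem := mul_mem (inv_mem hl') hl
  exact Equiv.ext fun j => le_antisymm (apply_le_of_smul_mk_permGL_eq h_mem h_eq.symm j)
    (apply_le_of_smul_mk_permGL_eq (inv_mem h_mem) (inv_smul_eq_iff.mpr h_eq) j)

lemma inDC_permGL_smul_elemRep {a b : Fin n} (hab : a ⋖ b) (π : Equiv.Perm (Fin n)) (u : F) :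
    inDC F n (if u = 0 ∨ π b < π a then π * Equiv.swap a b else π)
      (permGL F n π • (elemRep hab u : Cosets F n)) := by
  rw [inDC_iff_exists_smul_eq]
  by_cases hu : u = 0
  · refine ⟨1, one_mem _, ?_⟩
    rw [if_pos (Or.inl hu), one_smul, hu, elemRep_zero, permGL_mul]
    rfl
  by_cases h_lt : π b < π a
  · refine ⟨_, transvGL_mem_oppBorel h_lt u, ?_⟩
    rw [if_pos (Or.inr h_lt), MulAction.Quotient.smul_mk, MulAction.Quotient.smul_mk, smul_eq_mul,
      smul_eq_mul, elemRep, permGL_mul, ← mul_assoc, ← mul_assoc, permGL_mul_transvGL]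
  · have h_lt' : π a < π b := (not_lt.mp h_lt).lt_of_ne (π.injective.ne hab.ne)
    refine ⟨_, transvGL_mem_oppBorel h_lt' u⁻¹, ?_⟩
    have h_mk := mk_transvGL_eq_mk_elemRep hab (inv_ne_zero hu)
    rw [inv_inv] at h_mk
    rw [if_neg (not_or.mpr ⟨hu, h_lt⟩), ← h_mk, MulAction.Quotient.smul_mk,
      MulAction.Quotient.smul_mk, smul_eq_mul, smul_eq_mul, permGL_mul_transvGL]

theorem exists_inDC (C : Cosets F n) : ∃ π, inDC F n π C := by
  obtain ⟨g, rfl⟩ := QuotientGroup.mk_surjective C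
  refine Submonoid.induction_of_closure_eq_top_right (closure_Bsub_union_permGL_swap F n) g
    ⟨1, 1, 1, (oppBorel F n).one_mem, (Bsub F n).one_mem, by simp [permGL_one]⟩ ?_
  rintro g s (hs | ⟨a, b, hab, rfl⟩) ⟨π, hπ⟩
  · exact ⟨π, by rwa [QuotientGroup.mk_mul_of_mem _ hs]⟩
  · obtain ⟨l, hl, h_eq⟩ := inDC_iff_exists_smul_eq.mp hπ
    have hh : (l * permGL F n π)⁻¹ * g ∈ Bsub F n := QuotientGroup.eq.mp h_eq
    have h_smul : ((g * permGL F n (Equiv.swap a b) : GLn F n) : Cosets F n)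
        = l • permGL F n π • ((l * permGL F n π)⁻¹ * g) • (elemRep hab (0 : F) : Cosets F n) := by
      rw [← mul_smul, ← mul_smul, mul_inv_cancel_left, elemRep_zero]
      rfl
    rw [h_smul, smul_mk_elemRep hab hh]
    exact ⟨_, inDC_smul hl (inDC_permGL_smul_elemRep hab π _)⟩

/-- The permutation `π` with `C ∈ [π]`: this is `proj_{S_n}` on basis vectors. -/
def bruhatPerm (C : Cosets F n) : Equiv.Perm (Fin n) := (exists_inDC C).choose

lemma inDC_iff_bruhatPerm_eq {π : Equiv.Perm (Fin n)} {C : Cosets F n} :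
    inDC F n π C ↔ bruhatPerm C = π :=
  ⟨eq_of_inDC_of_inDC (exists_inDC C).choose_spec, fun h => h ▸ (exists_inDC C).choose_spec⟩

lemma exists_smul_permGL_bruhatPerm_eq (C : Cosets F n) :
    ∃ l ∈ oppBorel F n, l • (permGL F n (bruhatPerm C) : Cosets F n) = C :=
  inDC_iff_exists_smul_eq.mp (inDC_iff_bruhatPerm_eq.mpr rfl)

lemma bruhatPerm_smul {l : GLn F n} (hl : l ∈ oppBorel F n) (C : Cosets F n) :
    bruhatPerm (l • C) = bruhatPerm C :=
  inDC_iff_bruhatPerm_eq.mp (inDC_smul hl (inDC_iff_bruhatPerm_eq.mpr rfl))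

lemma bruhatPerm_permGL (π : Equiv.Perm (Fin n)) :
    bruhatPerm (permGL F n π : Cosets F n) = π :=
  inDC_iff_bruhatPerm_eq.mp (inDC_iff_exists_smul_eq.mpr ⟨1, one_mem _, one_smul _ _⟩)

lemma bruhatPerm_surjective :
    Function.Surjective (bruhatPerm : Cosets F n → Equiv.Perm (Fin n)) :=
  fun π => ⟨_, bruhatPerm_permGL π⟩

lemma pivotRow_eq_bruhatPerm (hn : 0 < n) (C : Cosets F n) :
    pivotRow F n C = bruhatPerm C ⟨0, hn⟩ := by
  obtain ⟨l, hl, h_eq⟩ := exists_smul_permGL_bruhatPerm_eq C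
  set π := bruhatPerm C
  obtain ⟨h, h_out⟩ := QuotientGroup.mk_out_eq_mul (Bsub F n) (l * permGL F n π)
  have out_apply (i : Fin n) : C.out i ⟨0, hn⟩
      = l i (π ⟨0, hn⟩) * (h : GLn F n) ⟨0, hn⟩ ⟨0, hn⟩ := by
    rw [← h_eq, MulAction.Quotient.smul_mk, smul_eq_mul, h_out]
    change ((l * permGL F n π : GLn F n).1 * (h : GLn F n).1) i _ = _
    have h_col (j : Fin n) (hj : j ≠ ⟨0, hn⟩) : (h : GLn F n) j ⟨0, hn⟩ = 0 :=
      h.2 _ _ (Fin.lt_def.mpr (Nat.pos_of_ne_zero fun h0 => hj (Fin.ext h0)))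
    rw [Matrix.mul_apply, Finset.sum_eq_single_of_mem _ (Finset.mem_univ ⟨0, hn⟩)
      fun j _ hj => by rw [h_col j hj, mul_zero]]
    have h_perm := inv_permGL_mul_mul_permGL_apply 1 π l i ⟨0, hn⟩
    rw [permGL_one, inv_one, one_mul] at h_perm
    rw [h_perm, Equiv.Perm.one_apply]
  refine IsLeast.csInf_eq ⟨⟨(π ⟨0, hn⟩).2, ?_⟩, ?_⟩
  · rw [out_apply]
    exact mul_ne_zero (diag_ne_zero_of_mem_oppBorel hl _) (diag_ne_zero_of_mem_Bsub h.2 _)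
  · rintro i ⟨hi, h_ne⟩
    rw [out_apply] at h_ne
    by_contra! h_lt
    exact h_ne (by rw [hl _ _ (Fin.lt_def.mpr h_lt), zero_mul])

end bruhat

/-! ### Lumping `G/B` to permutations -/

section lumpGB

variable {R : Type} [Field R] {N : ℕ}

lemma genMatP_eq_zero (q : R) {k : ℕ} (h : ¬k + 1 < N) : genMatP N q k = 0 := by
  ext π σ
  exact dif_neg h

lemma genMatP_mulVec {a b : Fin N} (hab : a ⋖ b) (q : R) (φ : Equiv.Perm (Fin N) → R)
    (π : Equiv.Perm (Fin N)) :
    (genMatP N q a).mulVec φ π = if π b < π a then q * φ (π * Equiv.swap a b)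
      else φ (π * Equiv.swap a b) + (q - 1) * φ π := by
  obtain ⟨h, rfl⟩ := eq_mk_add_one_of_covBy hab
  simp only [Matrix.mulVec, dotProduct, genMatP, dif_pos h]
  split_ifs
  · simp
  · simp [add_mul, Finset.sum_add_distrib]

/-- The weight `x_{π_1} / q^{N - π_1}` by which `X_{S_N}(q,x)` scales `π`; it is `0` for
`N = 0`. -/
def permWeight (q : R) (x : Fin N → R) (π : Equiv.Perm (Fin N)) : R :=
  if h : 0 < N then x (π ⟨0, h⟩) / q ^ (N - 1 - (π ⟨0, h⟩ : ℕ)) else 0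

lemma XSnP_eq_diagonal (q : R) (x : Fin N → R) : XSnP N q x = Matrix.diagonal (permWeight q x) := by
  ext π σ
  simp only [XSnP, permWeight, Matrix.diagonal_apply, eq_comm]

variable {F n K}

lemma XGB_eq_diagonal (x : Fin n → K) :
    XGB F n K x = Matrix.diagonal (permWeight (Fintype.card F : K) x ∘ bruhatPerm) := by
  ext C D
  rcases n.eq_zero_or_pos with rfl | hn
  · simp [XGB, permWeight, Matrix.diagonal_apply]
  · simp [XGB, permWeight, Matrix.diagonal_apply, pivotRow_eq_bruhatPerm hn, hn, eq_comm]

lemma bruhatPerm_lump_genGB (k : ℕ) :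
    Lump (bruhatPerm : Cosets F n → Equiv.Perm (Fin n)) (genGB F n K k)
      (genMatP n (Fintype.card F : K) k) := by
  by_cases h : k + 1 < n
  swap
  · rw [genGB_eq_zero h, genMatP_eq_zero _ h]
    exact Lump.zero _
  obtain ⟨a, b, hab, rfl⟩ := exists_covBy_of_add_one_lt h
  intro φ
  ext C
  obtain ⟨l, hl, h_eq⟩ := exists_smul_permGL_bruhatPerm_eq C
  set π := bruhatPerm C with hπ
  have bruhatPerm_eq (u : F) :
      bruhatPerm ((l * permGL F n π) • (elemRep hab u : Cosets F n))
        = if u = 0 ∨ π b < π a then π * Equiv.swap a b else π := by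
    rw [mul_smul, bruhatPerm_smul hl]
    exact inDC_iff_bruhatPerm_eq.mp (inDC_permGL_smul_elemRep hab π u)
  have h_mulVec := genGB_mulVec_mk hab (φ ∘ bruhatPerm) (l * permGL F n π)
  rw [← smul_eq_mul, ← MulAction.Quotient.smul_mk, h_eq, smul_eq_mul] at h_mulVec
  rw [h_mulVec, Function.comp_apply, genMatP_mulVec hab, ← hπ]
  simp only [Function.comp_apply, bruhatPerm_eq]
  split_ifs with h_lt
  · simp [h_lt]
  · simp only [h_lt, or_false]
    rw [← Finset.add_sum_erase Finset.univ _ (Finset.mem_univ (0 : F)), if_pos rfl,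
      Finset.sum_congr rfl fun u hu => by rw [if_neg (Finset.ne_of_mem_erase hu)],
      Finset.sum_const, Finset.card_erase_of_mem (Finset.mem_univ _), Finset.card_univ,
      nsmul_eq_mul, Nat.cast_pred Fintype.card_pos]

theorem bruhatPerm_lump_TGB (x : Fin n → K) :
    Lump (bruhatPerm : Cosets F n → Equiv.Perm (Fin n)) (TGB F n K x)
      (TSnP n (Fintype.card F : K) x) := by
  refine Lump.tsetlin rfl (fun _ => rfl) rfl (fun _ => rfl) bruhatPerm_lump_genGB ?_ n
  rw [XGB_eq_diagonal, XSnP_eq_diagonal]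
  exact Lump.diagonal _ _

end lumpGB

/-! ### Irreducibility -/

section irreducible

lemma isIrreducible_of_closure_eq_top {G R : Type*} [Group G] [Ring R] [LinearOrder R]
    [IsStrictOrderedRing R] {H : Subgroup G} [Finite (G ⧸ H)] {T : Matrix (G ⧸ H) (G ⧸ H) R}
    (hT : ∀ C D, 0 ≤ T C D) {S : Set G} (hS : Submonoid.closure S = ⊤) (h_one : 1 ∈ S)
    (h_pos : ∀ s ∈ S, ∀ g : G, 0 < T g (g * s : G)) : T.IsIrreducible := by
  cases nonempty_fintype (G ⧸ H)
  rw [Matrix.isIrreducible_iff_exists_pow_pos hT]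
  intro C D
  obtain ⟨g, rfl⟩ := QuotientGroup.mk_surjective C
  obtain ⟨g', rfl⟩ := QuotientGroup.mk_surjective D
  rw [← mul_inv_cancel_left g g']
  refine Submonoid.induction_of_closure_eq_top_right
    (motive := fun h => ∃ k > 0, 0 < (T ^ k) g (g * h : G)) hS (g⁻¹ * g') ?_ ?_
  · exact ⟨1, one_pos, by simpa only [pow_one] using h_pos 1 h_one g⟩
  · rintro h s hs ⟨k, -, hk⟩
    refine ⟨k + 1, k.succ_pos, ?_⟩
    rw [pow_succ]
    refine Finset.sum_pos' (fun i _ => mul_nonneg (Matrix.pow_apply_nonneg hT k _ i) (hT i _))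
      ⟨_, Finset.mem_univ _, mul_pos hk ?_⟩
    rw [← mul_assoc]
    exact h_pos s hs (g * h)

/-- The cycle `s_k ⋯ s_1`, where `s_i` swaps the (0-based) positions `i - 1` and `i`, and
`s_i = 1` for `i ≥ N`. -/
def initialCycle (N : ℕ) : ℕ → Equiv.Perm (Fin N)
  | 0 => 1
  | k + 1 =>
    (if h : k + 1 < N then Equiv.swap ⟨k, Nat.lt_of_succ_lt h⟩ ⟨k + 1, h⟩
      else Equiv.refl (Fin N)) * initialCycle N k

lemma initialCycle_succ {N : ℕ} {a b : Fin N} (hab : a ⋖ b) :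
    initialCycle N (a + 1) = Equiv.swap a b * initialCycle N a := by
  obtain ⟨h, rfl⟩ := eq_mk_add_one_of_covBy hab
  rw [initialCycle, dif_pos h]

variable {F n}

variable (F n) in
lemma closure_Bsub_union_permGL_initialCycle :
    Submonoid.closure ((Bsub F n : Set (GLn F n)) ∪
      {g | ∃ k < n, g = permGL F n (initialCycle n k)}) = ⊤ := by
  rw [← top_le_iff, ← closure_Bsub_union_permGL_swap, Submonoid.closure_le]
  have cycle_mem {k : ℕ} (hk : k < n) : permGL F n (initialCycle n k) ∈
      Submonoid.closure ((Bsub F n : Set (GLn F n)) ∪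
        {g | ∃ k < n, g = permGL F n (initialCycle n k)}) :=
    Submonoid.subset_closure (Or.inr ⟨k, hk, rfl⟩)
  rintro _ (hg | ⟨a, b, hab, rfl⟩)
  · exact Submonoid.subset_closure (Or.inl hg)
  · rw [← mul_inv_eq_of_eq_mul (initialCycle_succ hab), permGL_mul, permGL_inv]
    refine mul_mem (cycle_mem (eq_mk_add_one_of_covBy hab).1) ?_
    exact Submonoid.powers_le.mpr (cycle_mem a.2)
      (mem_powers_iff_mem_zpowers.mpr (inv_mem (Subgroup.mem_zpowers _)))

variable {K}

lemma genGB_mk_apply {a b : Fin n} (hab : a ⋖ b) (g : GLn F n) (D : Cosets F n) :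
    genGB F n K a g D = Finset.card {u : F | g • (elemRep hab u : Cosets F n) = D} := by
  have h_single := genGB_mulVec_mk hab (Pi.single D (1 : K)) g
  rw [Matrix.mulVec_single_one] at h_single
  simp only [Matrix.col_apply, Pi.single_apply, Finset.sum_boole] at h_single
  convert h_single

lemma TGB_apply (x : Fin n → K) (C D : Cosets F n) :
    TGB F n K x C D = (∑ k ∈ Finset.range n, prodGenGB F n K k C D) *
      permWeight (Fintype.card F : K) x (bruhatPerm D) := by
  rw [TGB, XGB_eq_diagonal, Matrix.mul_diagonal, Matrix.sum_apply]
  rfl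

variable [LinearOrder K] [IsStrictOrderedRing K]

lemma permWeight_pos {N : ℕ} (hN : 0 < N) {q : K} (hq : 0 < q) {x : Fin N → K}
    (hx : ∀ i, 0 < x i) (π : Equiv.Perm (Fin N)) : 0 < permWeight q x π := by
  rw [permWeight, dif_pos hN]
  exact div_pos (hx _) (pow_pos hq _)

lemma genGB_nonneg (k : ℕ) (C D : Cosets F n) : 0 ≤ genGB F n K k C D := by
  unfold genGB
  split_ifs <;> positivity

lemma prodGenGB_nonneg (k : ℕ) (C D : Cosets F n) : 0 ≤ prodGenGB F n K k C D := by
  induction k generalizing C with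
  | zero =>
    rw [prodGenGB, Matrix.one_apply]
    split_ifs <;> positivity
  | succ k ih => exact Finset.sum_nonneg fun E _ => mul_nonneg (genGB_nonneg k C E) (ih E)

lemma prodGenGB_mul_initialCycle_pos {k : ℕ} (hk : k < n) (g : GLn F n) :
    0 < prodGenGB F n K k g (g * permGL F n (initialCycle n k) : GLn F n) := by
  induction k generalizing g with
  | zero =>
    rw [initialCycle, permGL_one, mul_one, prodGenGB, Matrix.one_apply_eq]
    exact one_pos
  | succ k ih =>
    obtain ⟨a, b, hab, rfl⟩ := exists_covBy_of_add_one_lt hk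
    have h_gen : 0 < genGB F n K a g (g * permGL F n (Equiv.swap a b) : GLn F n) := by
      rw [genGB_mk_apply hab, Nat.cast_pos, Finset.card_pos]
      refine ⟨0, Finset.mem_filter.mpr ⟨Finset.mem_univ _, ?_⟩⟩
      rw [elemRep_zero, MulAction.Quotient.smul_mk, smul_eq_mul]
    rw [initialCycle_succ hab, permGL_mul, ← mul_assoc]
    exact Finset.sum_pos' (fun E _ => mul_nonneg (genGB_nonneg _ _ _) (prodGenGB_nonneg _ _ _))
      ⟨_, Finset.mem_univ _, mul_pos h_gen (ih a.2 _)⟩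

theorem TGB_isIrreducible (hn : 0 < n) {x : Fin n → K} (hx : ∀ i, 0 < x i) :
    (TGB F n K x).IsIrreducible := by
  have weight_pos := permWeight_pos hn (Nat.cast_pos.mpr (Fintype.card_pos (α := F))) hx
  have TGB_pos {k : ℕ} (hk : k < n) {C D : Cosets F n} (h_pos : 0 < prodGenGB F n K k C D) :
      0 < TGB F n K x C D := by
    rw [TGB_apply]
    exact mul_pos (Finset.sum_pos' (fun k _ => prodGenGB_nonneg k C D)
      ⟨k, Finset.mem_range.mpr hk, h_pos⟩) (weight_pos _)
  refine isIrreducible_of_closure_eq_top (fun C D => ?_)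
    (closure_Bsub_union_permGL_initialCycle F n) (Or.inl (Bsub F n).one_mem) ?_
  · rw [TGB_apply]
    exact mul_nonneg (Finset.sum_nonneg fun k _ => prodGenGB_nonneg k C D) (weight_pos _).le
  · rintro s (hs | ⟨k, hk, rfl⟩) g
    · rw [QuotientGroup.mk_mul_of_mem _ hs]
      exact TGB_pos hn (by simp [prodGenGB])
    · exact TGB_pos hk (prodGenGB_mul_initialCycle_pos hk g)

end irreducible

/-! ### The stationary distribution on double cosets -/

section doubleCosets

variable {F n K}

lemma smul_lump_genGB (g : GLn F n) (k : ℕ) :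
    Lump (fun C : Cosets F n => g • C) (genGB F n K k) (genGB F n K k) := by
  by_cases h : k + 1 < n
  swap
  · rw [genGB_eq_zero h]
    exact Lump.zero _
  obtain ⟨a, b, hab, rfl⟩ := exists_covBy_of_add_one_lt h
  intro φ
  ext C
  obtain ⟨g', rfl⟩ := QuotientGroup.mk_surjective C
  rw [genGB_mulVec_mk hab, Function.comp_apply, MulAction.Quotient.smul_mk, genGB_mulVec_mk hab]
  simp only [Function.comp_apply, smul_eq_mul, mul_smul]

lemma smul_lump_TGB (x : Fin n → K) {l : GLn F n} (hl : l ∈ oppBorel F n) :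
    Lump (fun C : Cosets F n => l • C) (TGB F n K x) (TGB F n K x) := by
  refine Lump.tsetlin rfl (fun _ => rfl) rfl (fun _ => rfl) (smul_lump_genGB l) ?_ n
  have h_comp : (bruhatPerm : Cosets F n → _) ∘ (fun C => l • C) = bruhatPerm :=
    funext (bruhatPerm_smul hl)
  have h_diagonal := Lump.diagonal (fun C : Cosets F n => l • C)
    (permWeight (Fintype.card F : K) x ∘ bruhatPerm)
  rwa [Function.comp_assoc, h_comp, ← XGB_eq_diagonal] at h_diagonal

theorem IsStationary.apply_eq_of_bruhatPerm_eq {x : Fin n → ℝ} {c : ℝ} {Ψ : Cosets F n → ℝ}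
    (hT : (TGB F n ℝ x).IsIrreducible) (hΨ : IsStationary (TGB F n ℝ x) c Ψ) {C D : Cosets F n}
    (h_eq : bruhatPerm C = bruhatPerm D) : Ψ C = Ψ D := by
  have apply_eq (C : Cosets F n) : Ψ C = Ψ (permGL F n (bruhatPerm C)) := by
    obtain ⟨l, hl, h_smul⟩ := exists_smul_permGL_bruhatPerm_eq C
    conv_lhs => rw [← h_smul]
    exact hΨ.apply_eq_of_lump hT (MulAction.injective l) (smul_lump_TGB x hl) _
  rw [apply_eq C, apply_eq D, h_eq]

/-! ### The size of a double coset -/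

lemma sum_mk_quotient {G R : Type*} [Group G] [Fintype G] [Semiring R] (H : Subgroup G)
    (φ : G ⧸ H → R) : ∑ g : G, φ g = Nat.card H * ∑ C, φ C := by
  rw [← sum_card_filter_mul Finset.univ (QuotientGroup.mk : G → G ⧸ H) φ, Finset.mul_sum]
  refine Finset.sum_congr rfl fun C _ => ?_
  have h_card := QuotientGroup.card_preimage_mk H {C}
  rw [Nat.card_unique (α := ({C} : Set (G ⧸ H))), mul_one] at h_card
  rw [← h_card, ← Fintype.card_subtype, ← Nat.card_eq_fintype_card]
  rfl

lemma one_vecMul_genGB [CharZero K] {a b : Fin n} (hab : a ⋖ b) :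
    Matrix.vecMul 1 (genGB F n K a) = (Fintype.card F : K) • 1 := by
  refine dotProduct_eq _ _ fun φ => ?_
  rw [← Matrix.dotProduct_mulVec, smul_dotProduct, one_dotProduct, one_dotProduct]
  have h_card : (Nat.card (Bsub F n) : K) ≠ 0 := Nat.cast_ne_zero.mpr Nat.card_pos.ne'
  refine mul_left_cancel₀ h_card ?_
  rw [← sum_mk_quotient, smul_eq_mul, mul_left_comm, ← sum_mk_quotient]
  simp only [genGB_mulVec_mk hab, MulAction.Quotient.smul_mk, smul_eq_mul]
  rw [Finset.sum_comm, Finset.sum_congr rfl fun u _ =>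
    Equiv.sum_comp (Equiv.mulRight (elemRep hab u)) fun g => φ (g : Cosets F n),
    Finset.sum_const, Finset.card_univ, nsmul_eq_mul]

lemma card_bruhatPerm_eq_mul {a b : Fin n} (hab : a ⋖ b) {π : Equiv.Perm (Fin n)}
    (h_lt : π a < π b) :
    Finset.card {C : Cosets F n | bruhatPerm C = π} =
      Fintype.card F * Finset.card {C : Cosets F n | bruhatPerm C = π * Equiv.swap a b} := by
  have h_vecMul := (bruhatPerm_lump_genGB (K := ℚ) (a : ℕ)).vecMul_push (1 : Cosets F n → ℚ)
  rw [one_vecMul_genGB hab, push_smul] at h_vecMul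
  have h_mulVec : (genMatP n (Fintype.card F : ℚ) a).mulVec (Pi.single (π * Equiv.swap a b) 1) =
      Pi.single π 1 := by
    ext σ
    rw [genMatP_mulVec hab]
    simp only [Pi.single_apply, mul_left_inj]
    grind [Equiv.Perm.mul_apply, Equiv.swap_apply_left, Equiv.swap_apply_right]
  have h_apply := congrArg (dotProduct · (Pi.single (π * Equiv.swap a b) 1)) h_vecMul
  rw [← Matrix.dotProduct_mulVec, h_mulVec] at h_apply
  simp only [dotProduct_single_one, Pi.smul_apply, smul_eq_mul, push, Pi.one_apply,
    Finset.sum_const, nsmul_eq_mul, mul_one] at h_apply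
  exact_mod_cast h_apply

lemma coinvCount_eq_add_one {N : ℕ} {a b : Fin N} (hab : a ⋖ b) {π : Equiv.Perm (Fin N)}
    (h_lt : π a < π b) : coinvCount π = coinvCount (π * Equiv.swap a b) + 1 := by
  have h_mem : (a, b) ∈ ({p | p.1 < p.2 ∧ π p.1 < π p.2} : Finset (Fin N × Fin N)) := by
    simp [hab.lt, h_lt]
  rw [coinvCount, ← Finset.card_erase_add_one h_mem, coinvCount]
  refine congrArg (· + 1) (Finset.card_equiv (.prodCongr (.swap a b) (.swap a b)) ?_)
  rintro ⟨i, j⟩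
  have h_swap := swap_lt_swap_of_covBy hab (i := i) (j := j)
  have h_swap' := swap_lt_swap_of_covBy hab (i := Equiv.swap a b i) (j := Equiv.swap a b j)
  simp only [Equiv.swap_apply_self] at h_swap'
  simp only [Finset.mem_erase, Finset.mem_filter, Finset.mem_univ, true_and, ne_eq,
    Prod.mk.injEq, Equiv.prodCongr_apply, Prod.map_apply, Equiv.Perm.mul_apply]
  have := hab.lt
  grind

lemma coinvCount_eq_zero_of_strictAnti {N : ℕ} {π : Equiv.Perm (Fin N)} (hπ : StrictAnti π) :
    coinvCount π = 0 := by
  rw [coinvCount, Finset.card_eq_zero, Finset.filter_eq_empty_iff]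
  rintro ⟨i, j⟩ - ⟨hij, h_lt⟩
  exact h_lt.asymm (hπ hij)

lemma bruhatPerm_eq_iff_of_strictAnti {π : Equiv.Perm (Fin n)} (hπ : StrictAnti π)
    {C : Cosets F n} : bruhatPerm C = π ↔ C = permGL F n π := by
  refine ⟨fun h => ?_, fun h => h ▸ bruhatPerm_permGL π⟩
  obtain ⟨l, hl, h_eq⟩ := exists_smul_permGL_bruhatPerm_eq C
  rw [h] at h_eq
  rw [← h_eq, eq_comm, MulAction.Quotient.smul_mk, QuotientGroup.eq, smul_eq_mul, ← mul_assoc]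
  intro i j hij
  rw [inv_permGL_mul_mul_permGL_apply]
  exact hl _ _ (hπ hij)

lemma strictAnti_of_forall_covBy {N : ℕ} {α : Type*} [Preorder α] {f : Fin N → α}
    (hf : ∀ a b, a ⋖ b → f b < f a) : StrictAnti f := by
  rcases N with _ | N
  · exact Subsingleton.strictAnti f
  · exact Fin.strictAnti_iff_succ_lt.mpr fun i =>
      hf _ _ (Fin.covBy_iff.mpr (Order.covBy_add_one _))

theorem card_bruhatPerm_eq (π : Equiv.Perm (Fin n)) :
    Finset.card {C : Cosets F n | bruhatPerm C = π} = Fintype.card F ^ coinvCount π := by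
  induction h_coinv : coinvCount π generalizing π with
  | zero =>
    have hπ : StrictAnti π := strictAnti_of_forall_covBy fun a b hab => by
      by_contra! h_le
      have := coinvCount_eq_add_one hab (h_le.lt_of_ne (π.injective.ne hab.ne))
      lia
    simp only [bruhatPerm_eq_iff_of_strictAnti hπ, Finset.filter_eq', Finset.mem_univ, if_true,
      Finset.card_singleton, pow_zero]
  | succ k ih =>
    obtain ⟨a, b, hab, h_lt⟩ : ∃ a b, a ⋖ b ∧ π a < π b := by
      by_contra! h_le
      have := coinvCount_eq_zero_of_strictAnti (strictAnti_of_forall_covBy fun a b hab =>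
        (h_le a b hab).lt_of_ne (π.injective.ne hab.ne'))
      lia
    have := coinvCount_eq_add_one hab h_lt
    rw [card_bruhatPerm_eq_mul hab h_lt, ih _ (by lia), pow_succ']

end doubleCosets

/-! ### Destandardization -/

section words

variable {l : ℕ} {m : Fin l → ℕ} {N : ℕ}

lemma nsum_zero : nsum l m 0 = 0 := by
  simp [nsum]

lemma nsum_succ (j : Fin l) : nsum l m ((j : ℕ) + 1) = nsum l m j + m j := by
  have h_filter : ({t | (t : ℕ) < (j : ℕ) + 1} : Finset (Fin l)) =
      insert j ({t | (t : ℕ) < j} : Finset (Fin l)) := by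
    ext t
    simp [le_iff_eq_or_lt, Fin.ext_iff]
  rw [nsum, h_filter, Finset.sum_insert (by simp), add_comm, nsum]

lemma nsum_mono : Monotone (nsum l m) := fun _ _ h =>
  Finset.sum_le_sum_of_subset (Finset.monotone_filter_right _ fun _ _ ht => ht.trans_le h)

lemma nsum_self : nsum l m l = ∑ t, m t := by
  simp [nsum]

lemma nsum_succ_add_sum_lt (j : Fin l) :
    nsum l m ((j : ℕ) + 1) + ∑ t with j < t, m t = ∑ t, m t := by
  rw [nsum, ← Finset.sum_filter_add_sum_filter_not Finset.univ (fun t : Fin l => (t : ℕ) < j + 1)]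
  simp only [Nat.lt_succ_iff, not_le, Fin.val_fin_le]

lemma blockOf_le_iff {v : ℕ} (hv : v < ∑ t, m t) {j : ℕ} :
    blockOf l m v ≤ j ↔ v < nsum l m (j + 1) := by
  refine ⟨fun h => ?_, fun h => Nat.sInf_le h⟩
  have h_mem : blockOf l m v ∈ {j : ℕ | v < nsum l m (j + 1)} :=
    Nat.sInf_mem ⟨l, (nsum_self ▸ hv).trans_le (nsum_mono l.le_succ)⟩
  exact h_mem.trans_le (nsum_mono (Nat.succ_le_succ h))

lemma blockOf_lt {v : ℕ} (hv : v < ∑ t, m t) : blockOf l m v < l := by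
  cases l with
  | zero => simp at hv
  | succ l => rwa [Nat.lt_succ_iff, blockOf_le_iff hv, nsum_self]

lemma blockOf_mono {v w : ℕ} (hw : w < ∑ t, m t) (h : v ≤ w) :
    blockOf l m v ≤ blockOf l m w :=
  (blockOf_le_iff (h.trans_lt hw)).mpr (h.trans_lt ((blockOf_le_iff hw).mp le_rfl))

lemma blockOf_eq_iff {v : ℕ} (hv : v < ∑ t, m t) {j : ℕ} :
    blockOf l m v = j ↔ nsum l m j ≤ v ∧ v < nsum l m (j + 1) := by
  rw [le_antisymm_iff, blockOf_le_iff hv, and_comm]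
  refine and_congr_left fun _ => ?_
  cases j with
  | zero => simp [nsum_zero]
  | succ j => rw [Nat.succ_le_iff, ← not_le, blockOf_le_iff hv, not_lt]

/-- The letter by which destandardization replaces `v`: the index of the block of `v`. -/
def letter (hm : ∑ t, m t = N) (v : Fin N) : Fin l :=
  ⟨blockOf l m v, blockOf_lt (hm ▸ v.2)⟩

lemma letter_mono (hm : ∑ t, m t = N) : Monotone (letter hm) := fun _ w h =>
  blockOf_mono (hm ▸ w.2) h

lemma sum_letter_eq {M : Type*} [AddCommMonoid M] (hm : ∑ t, m t = N) (g : ℕ → M) (j : Fin l) :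
    ∑ v with letter hm v = j, g v = ∑ r ∈ Finset.range (m j), g (nsum l m j + r) := by
  simp only [letter, Fin.ext_iff]
  have h_Ico : (Finset.range N).filter (fun v => blockOf l m v = j) =
      Finset.Ico (nsum l m j) (nsum l m (j + 1)) := by
    ext v
    have h_le := nsum_succ_add_sum_lt (m := m) j
    simp only [Finset.mem_filter, Finset.mem_range, Finset.mem_Ico]
    refine ⟨fun h => (blockOf_eq_iff (hm ▸ h.1)).mp h.2, fun h => ?_⟩
    have hv : v < ∑ t, m t := by lia
    exact ⟨hm ▸ hv, (blockOf_eq_iff hv).mpr h⟩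
  rw [Finset.sum_filter, Fin.sum_univ_eq_sum_range (fun v => if blockOf l m v = j then g v else 0),
    ← Finset.sum_filter, h_Ico, Finset.sum_Ico_eq_sum_range, nsum_succ, Nat.add_sub_cancel_left]

lemma card_letter_eq (hm : ∑ t, m t = N) (j : Fin l) :
    Finset.card {v | letter hm v = j} = m j := by
  simpa using sum_letter_eq (M := ℕ) hm (fun _ => 1) j

/-- The destandardization of `π`, whose letters are those of the values of `π`. -/
def destd (hm : ∑ t, m t = N) (π : Equiv.Perm (Fin N)) : Words N l m :=
  ⟨fun p => letter hm (π p), fun j => by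
    rw [← card_letter_eq hm j]
    exact Finset.card_equiv π fun p => by simp⟩

lemma destd_surjective (hm : ∑ t, m t = N) : Function.Surjective (destd hm) := by
  intro w
  have h_card (j : Fin l) :
      Fintype.card {p // w.1 p = j} = Fintype.card {v // letter hm v = j} := by
    rw [Fintype.card_subtype, Fintype.card_subtype, w.2 j, card_letter_eq hm j]
  let e (j : Fin l) := Fintype.equivOfCardEq (h_card j)
  exact ⟨(Equiv.sigmaFiberEquiv w.1).symm.trans
    ((Equiv.sigmaCongrRight e).trans (Equiv.sigmaFiberEquiv (letter hm))),
    Subtype.ext (funext fun p => (e (w.1 p) ⟨p, rfl⟩).2)⟩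

lemma destd_eq_iff (hm : ∑ t, m t = N) {π : Equiv.Perm (Fin N)} {w : Words N l m} :
    destd hm π = w ↔ ∀ p, (w.1 p : ℕ) = blockOf l m (π p) := by
  simp only [Subtype.ext_iff, funext_iff, Fin.ext_iff, eq_comm]
  rfl

lemma destd_mul_swap (hm : ∑ t, m t = N) {π : Equiv.Perm (Fin N)} {a b : Fin N}
    (h_eq : letter hm (π a) = letter hm (π b)) : destd hm (π * Equiv.swap a b) = destd hm π := by
  refine Subtype.ext (funext fun p => ?_)
  change letter hm (π (Equiv.swap a b p)) = letter hm (π p)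
  grind

lemma genMatW_mulVec_destd {R : Type} [Field R] (hm : ∑ t, m t = N) {a b : Fin N} (hab : a ⋖ b)
    (q : R) (φ : Words N l m → R) (π : Equiv.Perm (Fin N)) :
    (genMatW N l m q a).mulVec φ (destd hm π) =
      if letter hm (π b) ≤ letter hm (π a) then q * φ (destd hm (π * Equiv.swap a b))
      else φ (destd hm (π * Equiv.swap a b)) + (q - 1) * φ (destd hm π) := by
  obtain ⟨h, rfl⟩ := eq_mk_add_one_of_covBy hab
  have h_comp (u : Words N l m) : u.1 = (destd hm π).1 ∘ Equiv.swap a ⟨a + 1, h⟩ ↔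
      u = destd hm (π * Equiv.swap a ⟨a + 1, h⟩) := by
    rw [Subtype.ext_iff]
    rfl
  simp only [Matrix.mulVec, dotProduct, genMatW, dif_pos h, h_comp]
  change ∑ u, (if letter hm (π ⟨a + 1, h⟩) ≤ letter hm (π a) then _ else _) * φ u = _
  split_ifs
  · simp
  · simp [add_mul, Finset.sum_add_distrib]

lemma destd_lump_genMatP {R : Type} [Field R] (hm : ∑ t, m t = N) (q : R) (k : ℕ) :
    Lump (destd hm) (genMatP N q k) (genMatW N l m q k) := by
  by_cases h : k + 1 < N
  swap
  · have h_zero : genMatW N l m q k = 0 := by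
      ext w u
      exact dif_neg h
    rw [genMatP_eq_zero q h, h_zero]
    exact Lump.zero _
  obtain ⟨a, b, hab, rfl⟩ := exists_covBy_of_add_one_lt h
  intro φ
  ext π
  rw [Function.comp_apply, genMatP_mulVec hab, genMatW_mulVec_destd hm hab]
  simp only [Function.comp_apply]
  by_cases h_lt : π b < π a
  · rw [if_pos h_lt, if_pos (letter_mono hm h_lt.le)]
  · rw [if_neg h_lt]
    split_ifs with h_le
    · rw [destd_mul_swap hm (le_antisymm (letter_mono hm (not_lt.mp h_lt)) h_le)]
      ring
    · rfl

/-- The weight `x̄_{w_1} / (q^{m_{w_1+1} + ⋯ + m_l} [m_{w_1}]_q)` by which `X_{W_m}(q,x̄)` scales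
`w`; it is `0` for the empty word. -/
def wordWeight {R : Type} [Field R] (q : R) (xb : Fin l → R) (w : Words N l m) : R :=
  if h : 0 < N then
    xb (w.1 ⟨0, h⟩) / (q ^ (∑ t with w.1 ⟨0, h⟩ < t, m t) * qInt q (m (w.1 ⟨0, h⟩)))
  else 0

lemma XW_eq_diagonal {R : Type} [Field R] (q : R) (xb : Fin l → R) :
    XW N l m q xb = Matrix.diagonal (wordWeight q xb) := by
  ext w u
  simp only [XW, Matrix.diagonal_apply, eq_comm (a := w), wordWeight]

lemma qInt_pos {q : ℝ} (hq : 0 < q) {a : ℕ} (ha : 1 ≤ a) : 0 < qInt q a :=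
  Finset.sum_pos (fun r _ => pow_pos hq r) (Finset.nonempty_range_iff.mpr (by lia))

lemma sum_letter_eq_pow {R : Type} [Field R] (hm : ∑ t, m t = N) (q : R) (j : Fin l) :
    ∑ v with letter hm v = j, q ^ (N - 1 - (v : ℕ)) =
      q ^ (∑ t with j < t, m t) * qInt q (m j) := by
  rw [sum_letter_eq hm (fun v => q ^ (N - 1 - v)), ← Finset.sum_range_reflect, qInt,
    Finset.mul_sum]
  refine Finset.sum_congr rfl fun r hr => ?_
  have := nsum_succ_add_sum_lt (m := m) j
  have := nsum_succ (m := m) j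
  have := Finset.mem_range.mp hr
  rw [← pow_add]
  congr 1
  lia

/-- The weights `x̄_j = [m_j]_q x_{n_j}` on the letters induced by weights `x` on `Fin N`. -/
def IsLetterWeight (q : ℝ) (m : Fin l → ℕ) (x : Fin N → ℝ) (xb : Fin l → ℝ) : Prop :=
  ∀ (j : Fin l) (i : Fin N), (i : ℕ) + 1 = nsum l m ((j : ℕ) + 1) → xb j = qInt q (m j) * x i

section weights

variable {q : ℝ} {x : Fin N → ℝ} {xb : Fin l → ℝ}

lemma letterWeight_eq (hq : 0 < q) (hm1 : ∀ j, 1 ≤ m j) (hm : ∑ t, m t = N)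
    (hx : mCompatible N l m q x) (hxb : IsLetterWeight q m x xb) (v : Fin N) :
    xb (letter hm v) / (q ^ (∑ t with letter hm v < t, m t) * qInt q (m (letter hm v))) =
      x v / q ^ (N - 1 - (v : ℕ)) := by
  set j := letter hm v
  have h_sum := nsum_succ_add_sum_lt (m := m) j
  have h_succ := nsum_succ (m := m) j
  have h_one := hm1 j
  obtain ⟨i, hi⟩ : ∃ i : Fin N, (i : ℕ) + 1 = nsum l m (j + 1) :=
    ⟨⟨nsum l m (j + 1) - 1, by lia⟩, by simp only; lia⟩
  have h_block : blockOf l m i = j := (blockOf_eq_iff (by lia)).mpr (by lia)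
  rw [hx v i h_block.symm, hxb j i hi, mul_comm, mul_div_mul_right _ _ (qInt_pos hq h_one).ne']
  congr 2
  lia

lemma sum_letterWeight (hq : 0 < q) (hm1 : ∀ j, 1 ≤ m j) (hm : ∑ t, m t = N)
    (hx : mCompatible N l m q x) (hxb : IsLetterWeight q m x xb) : ∑ j, xb j = ∑ v, x v := by
  rw [← Finset.sum_fiberwise Finset.univ (letter hm) x]
  refine Finset.sum_congr rfl fun j _ => ?_
  have h_ne : q ^ (∑ t with j < t, m t) * qInt q (m j) ≠ 0 :=
    (mul_pos (pow_pos hq _) (qInt_pos hq (hm1 j))).ne'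
  calc xb j
      = xb j / (q ^ (∑ t with j < t, m t) * qInt q (m j)) *
          ∑ v with letter hm v = j, q ^ (N - 1 - (v : ℕ)) := by
        rw [sum_letter_eq_pow, div_mul_cancel₀ _ h_ne]
    _ = ∑ v with letter hm v = j, x v := by
        rw [Finset.mul_sum]
        refine Finset.sum_congr rfl fun v hv => ?_
        rw [← (Finset.mem_filter.mp hv).2, letterWeight_eq hq hm1 hm hx hxb,
          div_mul_cancel₀ _ (pow_pos hq _).ne']

theorem destd_lump_TSnP (hq : 0 < q) (hm1 : ∀ j, 1 ≤ m j) (hm : ∑ t, m t = N)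
    (hx : mCompatible N l m q x) (hxb : IsLetterWeight q m x xb) :
    Lump (destd hm) (TSnP N q x) (TWm N l m q xb) := by
  refine Lump.tsetlin rfl (fun _ => rfl) rfl (fun _ => rfl) (destd_lump_genMatP hm q) ?_ N
  have h_weight : permWeight q x = wordWeight q xb ∘ destd hm := by
    ext π
    rw [permWeight, Function.comp_apply, wordWeight]
    split_ifs with hN
    · exact (letterWeight_eq hq hm1 hm hx hxb (π ⟨0, hN⟩)).symm
    · rfl
  rw [XSnP_eq_diagonal, XW_eq_diagonal, h_weight]
  exact Lump.diagonal _ _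

end weights

end words

/-! ### Stationary distributions -/

theorem qTsetlin_lumping_general (hn : 0 < n) (x : Fin n → ℝ) (hx : ∀ i, 0 < x i)
    (Ψg : Cosets F n → ℝ) (hΨg : IsStationary (TGB F n ℝ x) (∑ i, x i) Ψg)
    (Ψs : Equiv.Perm (Fin n) → ℝ)
    (hΨs : IsStationary (TSnP n (Fintype.card F : ℝ) x) (∑ i, x i) Ψs) :
    (∀ (π : Equiv.Perm (Fin n)) (C C' : Cosets F n),
      inDC F n π C → inDC F n π C' → Ψg C = Ψg C') ∧
    (∀ π : Equiv.Perm (Fin n),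
      Ψs π = ∑ C ∈ Finset.univ.filter fun C : Cosets F n => inDC F n π C, Ψg C) ∧
    (∀ (π : Equiv.Perm (Fin n)) (C : Cosets F n), inDC F n π C →
      Ψs π = (Fintype.card F : ℝ) ^ coinvCount π * Ψg C) ∧
    (∀ (l : ℕ) (m : Fin l → ℕ), (∀ j, 1 ≤ m j) → (∑ j, m j = n) →
      mCompatible n l m (Fintype.card F : ℝ) x →
      ∀ xb : Fin l → ℝ,
        (∀ (j : Fin l) (iF : Fin n), (iF : ℕ) + 1 = nsum l m ((j : ℕ) + 1) →
          xb j = qInt (Fintype.card F : ℝ) (m j) * x iF) →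
        ∀ Ψw : Words n l m → ℝ,
          IsStationary (TWm n l m (Fintype.card F : ℝ) xb) (∑ j, xb j) Ψw →
          ∀ w : Words n l m,
            Ψw w = ∑ π ∈ Finset.univ.filter fun π : Equiv.Perm (Fin n) =>
                ∀ p : Fin n, (w.1 p : ℕ) = blockOf l m ((π p : ℕ)), Ψs π) := by
  have hTg := TGB_isIrreducible (F := F) hn hx
  have hTs := (bruhatPerm_lump_TGB x).isIrreducible bruhatPerm_surjective hTg
  have Ψs_eq : Ψs = push bruhatPerm Ψg :=
    hΨs.eq hTs ((bruhatPerm_lump_TGB x).stationary hΨg)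
  simp only [inDC_iff_bruhatPerm_eq]
  refine ⟨fun π C C' hC hC' => hΨg.apply_eq_of_bruhatPerm_eq hTg (hC.trans hC'.symm),
    fun π => congrFun Ψs_eq π, fun π C hC => ?_, fun l m hm1 hm hcomp xb hxb Ψw hΨw w => ?_⟩
  · have Ψg_eq (D : Cosets F n) (hD : D ∈ ({D | bruhatPerm D = π} : Finset _)) : Ψg D = Ψg C :=
      hΨg.apply_eq_of_bruhatPerm_eq hTg ((Finset.mem_filter.mp hD).2.trans hC.symm)
    rw [Ψs_eq, push, Finset.sum_congr rfl Ψg_eq, Finset.sum_const, card_bruhatPerm_eq,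
      nsmul_eq_mul, Nat.cast_pow]
  · have hq : (0 : ℝ) < Fintype.card F := Nat.cast_pos.mpr Fintype.card_pos
    have h_lump := destd_lump_TSnP hq hm1 hm hcomp hxb
    rw [sum_letterWeight hq hm1 hm hcomp hxb] at hΨw
    have Ψw_eq := hΨw.eq (h_lump.isIrreducible (destd_surjective hm) hTs) (h_lump.stationary hΨs)
    simp only [Ψw_eq, push, destd_eq_iff]

/-- Lumping of stationary distributions.  Here `q` is a prime power (the
cardinality of the finite field `F`), `Ψg` and `Ψs` are stationary distributions of
`T_{G/B}(q,x)` and `T_{S_n}(q,x)`.  Then: (a) `Ψg` is constant on double cosets; (b) the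
permutation stationary distribution is obtained by summing over the double coset, and
equals `q^{coinv π}` times the common value; (c) for a composition `m` with `x`
`m`-compatible and `x̄_j = [m_j]_q x_{n_j}`, any stationary distribution `Ψw` of
`T_{W_m}(q,x̄)` is obtained from `Ψs` by summing over the fibers of `destd_m`. -/
theorem qTsetlin_lumping (F : Type) [Field F] [Fintype F] [DecidableEq F]
    (n : ℕ) (x : Fin n → ℝ) (hx : ∀ i, 0 < x i) (hx1 : ∑ i, x i = 1)
    (Ψg : Cosets F n → ℝ) (hΨg : IsStationary (TGB F n ℝ x) (∑ i, x i) Ψg)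
    (Ψs : Equiv.Perm (Fin n) → ℝ)
    (hΨs : IsStationary (TSnP n (Fintype.card F : ℝ) x) (∑ i, x i) Ψs) :
    (∀ (π : Equiv.Perm (Fin n)) (C C' : Cosets F n),
      inDC F n π C → inDC F n π C' → Ψg C = Ψg C') ∧
    (∀ π : Equiv.Perm (Fin n),
      Ψs π = ∑ C ∈ Finset.univ.filter fun C : Cosets F n => inDC F n π C, Ψg C) ∧
    (∀ (π : Equiv.Perm (Fin n)) (C : Cosets F n), inDC F n π C →
      Ψs π = (Fintype.card F : ℝ) ^ coinvCount π * Ψg C) ∧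
    (∀ (l : ℕ) (m : Fin l → ℕ), (∀ j, 1 ≤ m j) → (∑ j, m j = n) →
      mCompatible n l m (Fintype.card F : ℝ) x →
      ∀ xb : Fin l → ℝ,
        (∀ (j : Fin l) (iF : Fin n), (iF : ℕ) + 1 = nsum l m ((j : ℕ) + 1) →
          xb j = qInt (Fintype.card F : ℝ) (m j) * x iF) →
        ∀ Ψw : Words n l m → ℝ,
          IsStationary (TWm n l m (Fintype.card F : ℝ) xb) (∑ j, xb j) Ψw →
          ∀ w : Words n l m,
            Ψw w = ∑ π ∈ Finset.univ.filter fun π : Equiv.Perm (Fin n) =>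
                ∀ p : Fin n, (w.1 p : ℕ) = blockOf l m ((π p : ℕ)), Ψs π) := by
  have hn : 0 < n := Nat.pos_of_ne_zero (by rintro rfl; simp at hx1)
  exact qTsetlin_lumping_general F n hn x hx Ψg hΨg Ψs hΨs

end QTsetlin
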